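/- (Hile–Protter type inequality for the discrete Schrödinger operator) With the same setup on a finite Ω ⊂ ℤⁿ, for any 1 ≤ k ≤ |Ω| − 1 with λ_{k+1} > λ_k: Σ_{i=1}^k λ_i/(λ_{k+1} − λ_i) ≥ (nk/4) ( ρ_min/ρ_max − (ρ_min/k) Σ_{i=1}^k λ_i ). -/

import Mathlib

/-!
The proof tests the Rayleigh quotient with `φ_i = x_α u_i - ∑_{j ≤ k} a_{ij} u_j`, the part of
`x_α u_i` orthogonal to the first `k` eigenfunctions. Since `Δx_α = 0`, the Leibniz rule gives
`(-Δ + V)(x_α u_i) = λ_i ρ x_α u_i - w_i`, where `w_i = 2Γ(x_α, u_i)` is `1/(2n)` times the centred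
difference of `u_i` along `e_α`. Completeness of the eigenfunctions (`expansion`, `rayleigh`) then
yields `(λ_{k+1} - λ_i) ‖φ_i‖²_ρ ≤ -⟨w_i, φ_i⟩`, and Cauchy–Schwarz turns this into
`-⟨w_i, φ_i⟩ ≤ ‖w_i‖²_{1/ρ} / (λ_{k+1} - λ_i)` (`pairing_le`).

Summed over `i ≤ k`, the terms coming from the `a_{ij}` cancel, because `a_{ij}` is symmetric and
`⟨w_i, u_j⟩` antisymmetric. What remains on the left is `-∑_i ⟨w_i, x_α u_i⟩`, which summation by
parts evaluates as `∑_i ∑_x u_i(x) u_i(x + e_α)` (`direction_bound`).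

Summing over `α` brings in the Dirichlet energy, which is at most `λ_i` since `V ≥ 0`: by
`energy_eq` the left side is at least `∑_i (1/ρ_max - λ_i)/2`, and by `sum_diff_sq_le` the norms
satisfy `∑_α ‖w_i‖²_{1/ρ} ≤ 2 λ_i / (n ρ_min)`.
-/

open Finset

/-- Adjacency indicator on the integer lattice `ℤⁿ`: `μ x y = 1` iff `x` and `y`
are at `ℓ¹`-distance `1`. -/
def mu (n : ℕ) (x y : Fin n → ℤ) : ℝ :=
  if (∑ i, |x i - y i|) = 1 then 1 else 0

/-- Every vertex of `ℤⁿ` has degree `2n`. -/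
def deg (n : ℕ) : ℝ := 2 * n

/-- The normalized Laplacian on `ℤⁿ`: `Δf(x) = (1/(2n)) ∑_{y∼x} (f(y) - f(x))`. -/
noncomputable def lap (n : ℕ) (f : (Fin n → ℤ) → ℝ) (x : Fin n → ℤ) : ℝ :=
  (1 / deg n) * ∑ᶠ y, mu n x y * (f y - f x)

/-- The carré du champ operator on `ℤⁿ`:
`Γ(f,g)(x) = (1/(2 d_x)) ∑_y μ_{xy} (f(y)-f(x))(g(y)-g(x))`. -/
noncomputable def gam (n : ℕ) (f g : (Fin n → ℤ) → ℝ) (x : Fin n → ℤ) : ℝ :=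
  (1 / (2 * deg n)) * ∑ᶠ y, mu n x y * (f y - f x) * (g y - g x)

/-- The `α`-th coordinate function on `ℤⁿ`. -/
def coord {n : ℕ} (α : Fin n) (x : Fin n → ℤ) : ℝ := x α

/-! ### The lattice Laplacian as second differences -/

/-- The `α`-th standard basis vector of `ℤⁿ`. -/
def stdE {n : ℕ} (α : Fin n) : Fin n → ℤ := Pi.single α 1

/-- The map `(α, ±) ↦ x ± e_α` enumerating the neighbours of `x`. -/
def nbr {n : ℕ} (x : Fin n → ℤ) (p : Fin n × Bool) : Fin n → ℤ :=
  if p.2 then x + stdE p.1 else x - stdE p.1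

lemma nbr_injective {n : ℕ} (x : Fin n → ℤ) : Function.Injective (nbr x) := by
  rintro ⟨α, a⟩ ⟨β, b⟩ h
  have h1 := congrFun h α
  have h2 := congrFun h β
  by_cases hab : α = β
  · subst hab
    cases a <;> cases b <;> simp [nbr, stdE] at h1 ⊢ <;> omega
  · exfalso
    cases a <;> cases b <;> simp [nbr, stdE, hab] at h1

lemma mem_nbr_of_dist {n : ℕ} (x y : Fin n → ℤ) (h : (∑ i, |x i - y i|) = 1) :
    y ∈ Finset.univ.image (nbr x) := by
  obtain ⟨α, hα⟩ : ∃ α, x α - y α ≠ 0 := by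
    by_contra! hc
    simp [hc] at h
  rw [← Finset.add_sum_erase _ _ (Finset.mem_univ α)] at h
  have h1 : 1 ≤ |x α - y α| := Int.one_le_abs hα
  have h0 : 0 ≤ ∑ i ∈ Finset.univ.erase α, |x i - y i| :=
    Finset.sum_nonneg fun i _ => abs_nonneg _
  have hs : ∑ i ∈ Finset.univ.erase α, |x i - y i| = 0 := by omega
  have hA : |x α - y α| = 1 := by omega
  rw [Finset.sum_eq_zero_iff_of_nonneg (fun i _ => abs_nonneg _)] at hs
  have hz : ∀ i, i ≠ α → y i = x i := fun i hi => by
    have := hs i (by simp [hi])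
    rw [abs_eq_zero] at this
    omega
  simp only [Finset.mem_image, Finset.mem_univ, true_and]
  rcases (abs_eq (by norm_num : (0 : ℤ) ≤ 1)).1 hA with h' | h'
  · refine ⟨(α, false), ?_⟩
    funext i
    by_cases hi : i = α
    · subst hi; simp [nbr, stdE]; omega
    · simp [nbr, stdE, hi, hz i hi]
  · refine ⟨(α, true), ?_⟩
    funext i
    by_cases hi : i = α
    · subst hi; simp [nbr, stdE]; omega
    · simp [nbr, stdE, hi, hz i hi]

lemma mu_nbr {n : ℕ} (x : Fin n → ℤ) (p : Fin n × Bool) : mu n x (nbr x p) = 1 := by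
  obtain ⟨α, a⟩ := p
  unfold mu
  rw [if_pos]
  rw [Finset.sum_eq_single α]
  · cases a <;> simp [nbr, stdE]
  · intro b _ hb
    cases a <;> simp [nbr, stdE, hb]
  · simp

/-- The `finsum` defining the Laplacian, written as second differences along the axes. -/
lemma lap_eq (n : ℕ) (f : (Fin n → ℤ) → ℝ) (x : Fin n → ℤ) :
    lap n f x = (1 / deg n) * ∑ α, (f (x + stdE α) + f (x - stdE α) - 2 * f x) := by
  unfold lap
  congr 1
  rw [finsum_eq_sum_of_support_subset (s := Finset.univ.image (nbr x))]
  · rw [Finset.sum_image fun a _ b _ h => nbr_injective x h, Fintype.sum_prod_type]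
    refine Finset.sum_congr rfl fun α _ => ?_
    rw [Fintype.sum_bool, mu_nbr, mu_nbr]
    simp only [nbr, if_true, Bool.false_eq_true, if_false]
    ring
  · intro y hy
    rw [Finset.mem_coe]
    refine mem_nbr_of_dist x y ?_
    by_contra hc
    exact hy (by simp [mu, hc])

/-! ### Summation by parts for functions supported in `Ω` -/

/-- Summation by parts: the shift by `e` is adjoint to the shift by `-e` on functions supported
in `Ω`. -/
lemma sum_shift {n : ℕ} (Ω : Finset (Fin n → ℤ)) (e : Fin n → ℤ) (f g : (Fin n → ℤ) → ℝ)
    (hf : ∀ x ∉ Ω, f x = 0) (hg : ∀ x ∉ Ω, g x = 0) :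
    ∑ x ∈ Ω, f x * g (x + e) = ∑ x ∈ Ω, f (x - e) * g x := by
  rw [← finsum_eq_sum_of_support_subset (s := Ω) (fun x => f x * g (x + e)),
    ← finsum_eq_sum_of_support_subset (s := Ω) (fun x => f (x - e) * g x),
    ← finsum_comp_equiv (Equiv.addRight e) (f := fun x => f (x - e) * g x)]
  · simp
  · intro x hx
    by_contra hc
    exact hx (by simp [hg x (by simpa using hc)])
  · intro x hx
    by_contra hc
    exact hx (by simp [hf x (by simpa using hc)])

lemma sum_sq_shift_le {n : ℕ} (Ω : Finset (Fin n → ℤ)) (e : Fin n → ℤ) (f : (Fin n → ℤ) → ℝ)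
    (hf : ∀ x ∉ Ω, f x = 0) :
    ∑ x ∈ Ω, f (x + e) ^ 2 ≤ ∑ x ∈ Ω, f x ^ 2 := by
  have h := Finset.sum_map Ω (Equiv.addRight e).toEmbedding (fun x => f x ^ 2)
  simp only [Equiv.coe_toEmbedding, Equiv.coe_addRight] at h
  rw [← h]
  have h2 : ∑ x ∈ Ω.map (Equiv.addRight e).toEmbedding, f x ^ 2
      = ∑ x ∈ (Ω.map (Equiv.addRight e).toEmbedding).filter (· ∈ Ω), f x ^ 2 := by
    rw [Finset.sum_filter]
    refine Finset.sum_congr rfl fun x _ => ?_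
    split_ifs with hx
    · rfl
    · simp [hf x hx]
  rw [h2]
  exact Finset.sum_le_sum_of_subset_of_nonneg (fun x hx => (Finset.mem_filter.1 hx).2)
    fun x _ _ => sq_nonneg _

/-- The centred difference of a function supported in `Ω` is controlled by its Dirichlet energy
in the same direction. -/
lemma sum_diff_sq_le {n : ℕ} (Ω : Finset (Fin n → ℤ)) (e : Fin n → ℤ) (f : (Fin n → ℤ) → ℝ)
    (hf : ∀ x ∉ Ω, f x = 0) :
    ∑ x ∈ Ω, (f (x + e) - f (x - e)) ^ 2
      ≤ 8 * (∑ x ∈ Ω, f x ^ 2 - ∑ x ∈ Ω, f x * f (x + e)) := by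
  have h1 := sum_sq_shift_le Ω e f hf
  have h2 := sum_sq_shift_le Ω (-e) f hf
  have h3 := sum_shift Ω e f f hf hf
  simp only [← sub_eq_add_neg] at h2
  have h4 : ∑ x ∈ Ω, (f (x + e) - f (x - e)) ^ 2 ≤
      ∑ x ∈ Ω, (2 * f (x + e) ^ 2 + 2 * f (x - e) ^ 2 + 4 * f x ^ 2
        - 4 * (f x * f (x + e)) - 4 * (f (x - e) * f x)) := by
    refine Finset.sum_le_sum fun x _ => ?_
    nlinarith [sq_nonneg (f (x + e) + f (x - e) - 2 * f x)]
  simp only [Finset.sum_sub_distrib, Finset.sum_add_distrib, ← Finset.mul_sum] at h4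
  linarith

/-- The centred difference along `e` is antisymmetric on functions supported in `Ω`. -/
lemma sum_diff_antisymm {n : ℕ} (Ω : Finset (Fin n → ℤ)) (e : Fin n → ℤ)
    (f g : (Fin n → ℤ) → ℝ) (hf : ∀ x ∉ Ω, f x = 0) (hg : ∀ x ∉ Ω, g x = 0) :
    ∑ x ∈ Ω, (f (x + e) - f (x - e)) * g x = -∑ x ∈ Ω, (g (x + e) - g (x - e)) * f x := by
  have h1 := sum_shift Ω e f g hf hg
  have h2 := sum_shift Ω e g f hg hf
  simp only [sub_mul, Finset.sum_sub_distrib]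
  simp only [mul_comm (f (_ + e)), mul_comm (g (_ + e))]
  linarith

/-! ### Coordinate functions and the Leibniz rule -/

lemma coord_add {n : ℕ} (α β : Fin n) (x : Fin n → ℤ) :
    coord α (x + stdE β) = coord α x + if β = α then 1 else 0 := by
  by_cases h : β = α
  · subst h; simp [coord, stdE]
  · simp [coord, stdE, h, Ne.symm h]

lemma coord_sub {n : ℕ} (α β : Fin n) (x : Fin n → ℤ) :
    coord α (x - stdE β) = coord α x - if β = α then 1 else 0 := by
  by_cases h : β = α
  · subst h; simp [coord, stdE]
  · simp [coord, stdE, h, Ne.symm h]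

/-- Pairing the centred difference of `f` with `x_α f`: the commutator of `x_α` with the shift by
`e_α` leaves the correlation `∑ f(x) f(x + e_α)`. -/
lemma sum_diff_coord {n : ℕ} (Ω : Finset (Fin n → ℤ)) (α : Fin n) (f : (Fin n → ℤ) → ℝ)
    (hf : ∀ x ∉ Ω, f x = 0) :
    ∑ x ∈ Ω, (f (x + stdE α) - f (x - stdE α)) * (coord α x * f x)
      = -∑ x ∈ Ω, f x * f (x + stdE α) := by
  have h1 := sum_shift Ω (stdE α) f (fun x => coord α x * f x) hf
    (fun x hx => by simp [hf x hx])
  simp only [coord_add, if_true] at h1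
  have h2 : ∑ x ∈ Ω, (f (x + stdE α) - f (x - stdE α)) * (coord α x * f x)
      = ∑ x ∈ Ω, (f x * ((coord α x + 1) * f (x + stdE α)) - f x * f (x + stdE α)
        - f (x - stdE α) * (coord α x * f x)) :=
    Finset.sum_congr rfl fun x _ => by ring
  rw [h2]
  simp only [Finset.sum_sub_distrib]
  linarith

/-- Leibniz rule `Δ(x_α f) = x_α Δf + 2Γ(x_α, f)`, using `Δx_α = 0`. -/
lemma lap_coord_mul {n : ℕ} (α : Fin n) (f : (Fin n → ℤ) → ℝ) (x : Fin n → ℤ) :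
    lap n (fun y => coord α y * f y) x
      = coord α x * lap n f x + (1 / deg n) * (f (x + stdE α) - f (x - stdE α)) := by
  have h : ∀ β : Fin n, coord α (x + stdE β) * f (x + stdE β)
      + coord α (x - stdE β) * f (x - stdE β) - 2 * (coord α x * f x)
      = coord α x * (f (x + stdE β) + f (x - stdE β) - 2 * f x)
        + if β = α then f (x + stdE β) - f (x - stdE β) else 0 := by
    intro β
    rw [coord_add, coord_sub]
    split_ifs <;> ring
  rw [lap_eq, lap_eq]
  simp only [h, Finset.sum_add_distrib, ← Finset.mul_sum]
  simp
  ring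

lemma lap_sum {n : ℕ} {ι : Type*} (s : Finset ι) (c : ι → ℝ) (u : ι → (Fin n → ℤ) → ℝ)
    (x : Fin n → ℤ) :
    lap n (fun y => ∑ j ∈ s, c j * u j y) x = ∑ j ∈ s, c j * lap n (u j) x := by
  simp only [lap_eq]
  have h : ∀ α : Fin n, (∑ j ∈ s, c j * u j (x + stdE α) + ∑ j ∈ s, c j * u j (x - stdE α)
      - 2 * ∑ j ∈ s, c j * u j x)
      = ∑ j ∈ s, c j * (u j (x + stdE α) + u j (x - stdE α) - 2 * u j x) := by
    intro α
    rw [Finset.mul_sum, ← Finset.sum_add_distrib, ← Finset.sum_sub_distrib]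
    exact Finset.sum_congr rfl fun j _ => by ring
  simp only [h]
  rw [Finset.sum_comm, Finset.mul_sum]
  refine Finset.sum_congr rfl fun j _ => ?_
  rw [← Finset.mul_sum]
  ring

lemma lap_sub {n : ℕ} (f g : (Fin n → ℤ) → ℝ) (x : Fin n → ℤ) :
    lap n (fun y => f y - g y) x = lap n f x - lap n g x := by
  simp only [lap_eq, ← mul_sub, ← Finset.sum_sub_distrib]
  congr 1
  exact Finset.sum_congr rfl fun j _ => by ring

/-! ### Dirichlet energy -/

/-- Discrete Green formula: the energy is twice `∑_α (‖f‖² - ∑ f(x) f(x + e_α))`. -/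
lemma energy_eq {n : ℕ} (hn : 0 < n) (Ω : Finset (Fin n → ℤ)) (f : (Fin n → ℤ) → ℝ)
    (hf : ∀ x ∉ Ω, f x = 0) :
    ∑ x ∈ Ω, -(lap n f x) * f x * deg n
      = 2 * ∑ α, (∑ x ∈ Ω, f x ^ 2 - ∑ x ∈ Ω, f x * f (x + stdE α)) := by
  have hd : deg n ≠ 0 := by unfold deg; positivity
  have h : ∀ x, -(lap n f x) * f x * deg n
      = ∑ α, (2 * f x ^ 2 - f x * f (x + stdE α) - f (x - stdE α) * f x) := by
    intro x
    rw [lap_eq]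
    have : -(1 / deg n * ∑ α, (f (x + stdE α) + f (x - stdE α) - 2 * f x)) * f x * deg n
      = ∑ α, (f (x + stdE α) + f (x - stdE α) - 2 * f x) * (-f x) := by
      rw [← Finset.sum_mul]; field_simp
    rw [this]
    exact Finset.sum_congr rfl fun α _ => by ring
  simp only [h]
  rw [Finset.sum_comm, Finset.mul_sum]
  refine Finset.sum_congr rfl fun α _ => ?_
  simp only [Finset.sum_sub_distrib, ← Finset.mul_sum]
  have := sum_shift Ω (stdE α) f f hf hf
  linarith

/-! ### Completeness and the Rayleigh principle -/

/-- Completeness: `|Ω|` orthonormal functions on `Ω` form a basis, so every function supported in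
`Ω` equals its Fourier expansion. A one-sided inverse of a square matrix is two-sided. -/
lemma expansion {n : ℕ} (Ω : Finset (Fin n → ℤ)) (m : (Fin n → ℤ) → ℝ)
    (u : ℕ → (Fin n → ℤ) → ℝ)
    (hu0 : ∀ i ∈ Finset.Icc 1 Ω.card, ∀ x ∉ Ω, u i x = 0)
    (horth : ∀ i ∈ Finset.Icc 1 Ω.card, ∀ j ∈ Finset.Icc 1 Ω.card,
      ∑ x ∈ Ω, u i x * u j x * m x = if i = j then 1 else 0)
    (f : (Fin n → ℤ) → ℝ) (hf : ∀ x ∉ Ω, f x = 0) (y : Fin n → ℤ) :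
    f y = ∑ j ∈ Finset.Icc 1 Ω.card, (∑ x ∈ Ω, f x * u j x * m x) * u j y := by
  by_cases hy : y ∈ Ω
  swap
  · rw [hf y hy, Finset.sum_eq_zero]
    intro j hj
    rw [hu0 j hj y hy, mul_zero]
  let M : Matrix (Finset.Icc 1 Ω.card) Ω ℝ := fun j x => u j x
  let P : Matrix Ω (Finset.Icc 1 Ω.card) ℝ := fun x j => u j x * m x
  have hMP : M * P = 1 := by
    ext i j
    rw [Matrix.mul_apply, Matrix.one_apply]
    have := horth i i.2 j j.2
    rw [← Finset.sum_coe_sort] at this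
    simp only [M, P, ← mul_assoc, this, Subtype.ext_iff]
  have hPM : P * M = 1 := (Matrix.mul_eq_one_comm_of_card_eq _ _ _ (by simp)).1 hMP
  have hxy : ∀ x ∈ Ω, ∑ j ∈ Finset.Icc 1 Ω.card, u j x * m x * u j y = if x = y then 1 else 0 := by
    intro x hx
    have := congrFun (congrFun hPM ⟨x, hx⟩) ⟨y, hy⟩
    rw [Matrix.mul_apply, Matrix.one_apply] at this
    rw [← Finset.sum_coe_sort]
    simpa [M, P] using this
  simp only [Finset.sum_mul]
  rw [Finset.sum_comm]
  have : ∀ x ∈ Ω, ∑ j ∈ Finset.Icc 1 Ω.card, f x * u j x * m x * u j y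
      = if x = y then f x else 0 := by
    intro x hx
    have h1 := hxy x hx
    have h2 : ∑ j ∈ Finset.Icc 1 Ω.card, f x * u j x * m x * u j y
      = f x * ∑ j ∈ Finset.Icc 1 Ω.card, u j x * m x * u j y := by
      rw [Finset.mul_sum]
      exact Finset.sum_congr rfl fun j _ => by ring
    rw [h2, h1]
    simp
  rw [Finset.sum_congr rfl this]
  simp [hy]

/-- Rayleigh principle: functions orthogonal to the first `k` eigenfunctions have Rayleigh quotient
at least `λ_{k+1}`. -/
lemma rayleigh {n : ℕ} (Ω : Finset (Fin n → ℤ))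
    (V ρ : (Fin n → ℤ) → ℝ) (lam : ℕ → ℝ) (u : ℕ → (Fin n → ℤ) → ℝ)
    (hu0 : ∀ i ∈ Finset.Icc 1 Ω.card, ∀ x ∉ Ω, u i x = 0)
    (heig : ∀ i ∈ Finset.Icc 1 Ω.card, ∀ x ∈ Ω,
      -(lap n (u i) x) + V x * u i x = lam i * ρ x * u i x)
    (horth : ∀ i ∈ Finset.Icc 1 Ω.card, ∀ j ∈ Finset.Icc 1 Ω.card,
      ∑ x ∈ Ω, u i x * u j x * ρ x * deg n = if i = j then 1 else 0)
    (hmono : ∀ i j : ℕ, 1 ≤ i → i ≤ j → j ≤ Ω.card → lam i ≤ lam j)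
    (k : ℕ) (φ : (Fin n → ℤ) → ℝ) (hφ : ∀ x ∉ Ω, φ x = 0)
    (hφo : ∀ j ∈ Finset.Icc 1 k, ∑ x ∈ Ω, φ x * u j x * ρ x * deg n = 0) :
    lam (k + 1) * ∑ x ∈ Ω, φ x ^ 2 * ρ x * deg n
      ≤ ∑ x ∈ Ω, (-(lap n φ x) + V x * φ x) * φ x * deg n := by
  set c : ℕ → ℝ := fun j => ∑ x ∈ Ω, φ x * u j x * ρ x * deg n with hc
  have hexp : φ = fun y => ∑ j ∈ Finset.Icc 1 Ω.card, c j * u j y := by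
    funext y
    have := expansion Ω (fun x => ρ x * deg n) u hu0
      (fun i hi j hj => by simpa only [← mul_assoc] using horth i hi j hj) φ hφ y
    simpa only [← mul_assoc] using this
  have hpt : ∀ x ∈ Ω, (-(lap n φ x) + V x * φ x)
      = ∑ j ∈ Finset.Icc 1 Ω.card, c j * (lam j * ρ x * u j x) := by
    intro x hx
    conv_lhs => rw [hexp]
    rw [lap_sum, Finset.mul_sum, ← Finset.sum_neg_distrib, ← Finset.sum_add_distrib]
    refine Finset.sum_congr rfl fun j hj => ?_
    rw [← heig j hj x hx]
    ring
  have hR : ∑ x ∈ Ω, (-(lap n φ x) + V x * φ x) * φ x * deg n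
      = ∑ j ∈ Finset.Icc 1 Ω.card, lam j * c j ^ 2 := by
    have : ∀ x ∈ Ω, (-(lap n φ x) + V x * φ x) * φ x * deg n
        = ∑ j ∈ Finset.Icc 1 Ω.card, (lam j * c j) * (φ x * u j x * ρ x * deg n) := by
      intro x hx
      rw [hpt x hx, Finset.sum_mul, Finset.sum_mul]
      exact Finset.sum_congr rfl fun j _ => by ring
    rw [Finset.sum_congr rfl this, Finset.sum_comm]
    refine Finset.sum_congr rfl fun j _ => ?_
    rw [← Finset.mul_sum]
    change lam j * c j * c j = _
    ring
  have hL : ∑ x ∈ Ω, φ x ^ 2 * ρ x * deg n = ∑ j ∈ Finset.Icc 1 Ω.card, c j ^ 2 := by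
    have : ∀ x ∈ Ω, φ x ^ 2 * ρ x * deg n
        = ∑ j ∈ Finset.Icc 1 Ω.card, c j * (φ x * u j x * ρ x * deg n) := by
      intro x hx
      have h1 := congrFun hexp x
      have h2 : φ x ^ 2 * ρ x * deg n = φ x * φ x * ρ x * deg n := by ring
      rw [h2]
      nth_rewrite 1 [h1]
      simp only [Finset.sum_mul]
      exact Finset.sum_congr rfl fun j _ => by ring
    rw [Finset.sum_congr rfl this, Finset.sum_comm]
    refine Finset.sum_congr rfl fun j _ => ?_
    rw [← Finset.mul_sum]
    change c j * c j = _
    ring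
  rw [hR, hL, Finset.mul_sum]
  refine Finset.sum_le_sum fun j hj => ?_
  rw [Finset.mem_Icc] at hj
  by_cases hjk : j ≤ k
  · have : c j = 0 := hφo j (Finset.mem_Icc.2 ⟨hj.1, hjk⟩)
    simp [this]
  · exact mul_le_mul_of_nonneg_right (hmono (k + 1) j (by omega) (by omega) hj.2) (sq_nonneg _)

/-! ### The Hile–Protter argument -/

/-- From `g‖φ‖² ≤ -⟨w, φ⟩` with `g > 0`, Cauchy–Schwarz gives `-⟨w, φ⟩ ≤ ‖w‖²/g`. Here
`w = D / d` and the weight `ρ ≥ r` costs a factor `1 / r`. -/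
lemma pairing_le {ι : Type*} (Ω : Finset ι) (D φ ρ : ι → ℝ) (d r g : ℝ) (hd : 0 < d) (hr : 0 < r)
    (hg : 0 < g) (hρ : ∀ x ∈ Ω, r ≤ ρ x)
    (h : g * ∑ x ∈ Ω, φ x ^ 2 * ρ x * d ≤ -∑ x ∈ Ω, D x * φ x) :
    -∑ x ∈ Ω, D x * φ x ≤ (∑ x ∈ Ω, D x ^ 2) / (d * r * g) := by
  have h1 : g * (r * d * ∑ x ∈ Ω, φ x ^ 2) ≤ g * ∑ x ∈ Ω, φ x ^ 2 * ρ x * d := by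
    refine mul_le_mul_of_nonneg_left ?_ hg.le
    rw [Finset.mul_sum]
    refine Finset.sum_le_sum fun x hx => ?_
    have := mul_le_mul_of_nonneg_left (hρ x hx) (mul_nonneg (sq_nonneg (φ x)) hd.le)
    linarith
  have hcs := Finset.sum_mul_sq_le_sq_mul_sq Ω D φ
  set p := ∑ x ∈ Ω, D x * φ x
  set A := ∑ x ∈ Ω, D x ^ 2
  set B := ∑ x ∈ Ω, φ x ^ 2
  have hA : 0 ≤ A := Finset.sum_nonneg fun x _ => sq_nonneg _
  have hB : 0 ≤ B := Finset.sum_nonneg fun x _ => sq_nonneg _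
  have hK : 0 < d * r * g := by positivity
  rw [le_div_iff₀ hK]
  have hp : d * r * g * B ≤ -p := by linarith
  have hp0 : 0 ≤ -p := le_trans (by positivity) hp
  rcases hp0.eq_or_lt with h0 | h0
  · rw [← h0]; simpa using hA
  · have h3 : (-p * (d * r * g)) * (-p) ≤ A * (-p) := by
      have := mul_le_mul_of_nonneg_left hp hA
      have := mul_le_mul_of_nonneg_left hcs hK.le
      nlinarith
    exact le_of_mul_le_mul_right h3 h0

/-- The Hile–Protter argument in one coordinate direction `α`, with trial functions
`φ_i = x_α u_i - ∑_{j ≤ k} a_{ij} u_j`. -/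
lemma direction_bound {n : ℕ} (hn : 0 < n) (Ω : Finset (Fin n → ℤ))
    (V ρ : (Fin n → ℤ) → ℝ) (r : ℝ) (hr : 0 < r) (hρ : ∀ x ∈ Ω, r ≤ ρ x)
    (lam : ℕ → ℝ) (u : ℕ → (Fin n → ℤ) → ℝ)
    (hu0 : ∀ i ∈ Finset.Icc 1 Ω.card, ∀ x ∉ Ω, u i x = 0)
    (heig : ∀ i ∈ Finset.Icc 1 Ω.card, ∀ x ∈ Ω,
      -(lap n (u i) x) + V x * u i x = lam i * ρ x * u i x)
    (horth : ∀ i ∈ Finset.Icc 1 Ω.card, ∀ j ∈ Finset.Icc 1 Ω.card,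
      ∑ x ∈ Ω, u i x * u j x * ρ x * deg n = if i = j then 1 else 0)
    (hmono : ∀ i j : ℕ, 1 ≤ i → i ≤ j → j ≤ Ω.card → lam i ≤ lam j)
    (k : ℕ) (hk : k ≤ Ω.card)
    (hgap : ∀ i ∈ Finset.Icc 1 k, lam i < lam (k + 1)) (α : Fin n) :
    ∑ i ∈ Finset.Icc 1 k, ∑ x ∈ Ω, u i x * u i (x + stdE α)
      ≤ ∑ i ∈ Finset.Icc 1 k, (∑ x ∈ Ω, (u i (x + stdE α) - u i (x - stdE α)) ^ 2)
        / (deg n * r * (lam (k + 1) - lam i)) := by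
  have hd : 0 < deg n := by unfold deg; positivity
  have hsub : ∀ i ∈ Finset.Icc 1 k, i ∈ Finset.Icc 1 Ω.card := fun i hi => by
    rw [Finset.mem_Icc] at hi ⊢; omega
  set a : ℕ → ℕ → ℝ := fun i j => ∑ x ∈ Ω, coord α x * u i x * u j x * ρ x * deg n with ha
  set b : ℕ → ℕ → ℝ := fun i j => ∑ x ∈ Ω, (u i (x + stdE α) - u i (x - stdE α)) * u j x with hb
  have hasymm : ∀ i j, a i j = a j i := fun i j =>
    Finset.sum_congr rfl fun x _ => by ring
  have hbanti : ∀ i ∈ Finset.Icc 1 k, ∀ j ∈ Finset.Icc 1 k, b i j = -b j i := fun i hi j hj =>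
    sum_diff_antisymm Ω _ _ _ (hu0 i (hsub i hi)) (hu0 j (hsub j hj))
  have hab : ∑ i ∈ Finset.Icc 1 k, ∑ j ∈ Finset.Icc 1 k, a i j * b i j = 0 := by
    have h1 : ∑ i ∈ Finset.Icc 1 k, ∑ j ∈ Finset.Icc 1 k, a i j * b i j
        = -∑ i ∈ Finset.Icc 1 k, ∑ j ∈ Finset.Icc 1 k, a i j * b i j := by
      conv_lhs => rw [Finset.sum_comm]
      rw [← Finset.sum_neg_distrib]
      refine Finset.sum_congr rfl fun i hi => ?_
      rw [← Finset.sum_neg_distrib]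
      refine Finset.sum_congr rfl fun j hj => ?_
      rw [hasymm j i, hbanti j hj i hi]
      ring
    linarith
  set φ : ℕ → (Fin n → ℤ) → ℝ :=
    fun i x => coord α x * u i x - ∑ j ∈ Finset.Icc 1 k, a i j * u j x with hφdef
  have hpair : ∀ i ∈ Finset.Icc 1 k,
      ∑ x ∈ Ω, (u i (x + stdE α) - u i (x - stdE α)) * φ i x
        = -∑ x ∈ Ω, u i x * u i (x + stdE α) - ∑ j ∈ Finset.Icc 1 k, a i j * b i j := by
    intro i hi
    simp only [hφdef, mul_sub, Finset.sum_sub_distrib]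
    rw [sum_diff_coord Ω α (u i) (hu0 i (hsub i hi))]
    congr 1
    simp only [hb, Finset.mul_sum]
    rw [Finset.sum_comm]
    exact Finset.sum_congr rfl fun j _ => Finset.sum_congr rfl fun x _ => by ring
  have hφ0 : ∀ i ∈ Finset.Icc 1 k, ∀ x ∉ Ω, φ i x = 0 := by
    intro i hi x hx
    simp only [hφdef]
    rw [hu0 i (hsub i hi) x hx, Finset.sum_eq_zero]
    · simp
    · intro j hj
      rw [hu0 j (hsub j hj) x hx, mul_zero]
  have hφo : ∀ i ∈ Finset.Icc 1 k, ∀ l ∈ Finset.Icc 1 k,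
      ∑ x ∈ Ω, φ i x * u l x * ρ x * deg n = 0 := by
    intro i hi l hl
    have h1 : ∑ x ∈ Ω, φ i x * u l x * ρ x * deg n
        = a i l - ∑ j ∈ Finset.Icc 1 k, a i j * ∑ x ∈ Ω, u j x * u l x * ρ x * deg n := by
      simp only [hφdef, sub_mul, Finset.sum_sub_distrib]
      congr 1
      simp only [Finset.sum_mul, Finset.mul_sum]
      rw [Finset.sum_comm]
      exact Finset.sum_congr rfl fun j _ => Finset.sum_congr rfl fun x _ => by ring
    rw [h1, Finset.sum_congr rfl fun j hj => by
      rw [horth j (hsub j hj) l (hsub l hl)]]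
    simp [Finset.mem_Icc.1 hl]
  have hφeq : ∀ i ∈ Finset.Icc 1 k,
      ∑ x ∈ Ω, (-(lap n (φ i) x) + V x * φ i x) * φ i x * deg n
        = lam i * ∑ x ∈ Ω, φ i x ^ 2 * ρ x * deg n
          - ∑ x ∈ Ω, (u i (x + stdE α) - u i (x - stdE α)) * φ i x := by
    intro i hi
    have hpt : ∀ x ∈ Ω, (-(lap n (φ i) x) + V x * φ i x) * φ i x * deg n
        = lam i * (φ i x ^ 2 * ρ x * deg n) - (u i (x + stdE α) - u i (x - stdE α)) * φ i x
          + ∑ j ∈ Finset.Icc 1 k,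
            (a i j * (lam i - lam j)) * (φ i x * u j x * ρ x * deg n) := by
      intro x hx
      have h1 : lap n (φ i) x = coord α x * lap n (u i) x
          + (1 / deg n) * (u i (x + stdE α) - u i (x - stdE α))
          - ∑ j ∈ Finset.Icc 1 k, a i j * lap n (u j) x := by
        rw [← lap_coord_mul, ← lap_sum, ← lap_sub]
      have h2 : ∑ j ∈ Finset.Icc 1 k, (a i j * (lam i - lam j)) * (φ i x * u j x * ρ x * deg n)
          = lam i * (φ i x * ρ x * deg n) * ∑ j ∈ Finset.Icc 1 k, a i j * u j x
            - φ i x * deg n * ∑ j ∈ Finset.Icc 1 k, a i j * (lam j * ρ x * u j x) := by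
        rw [Finset.mul_sum, Finset.mul_sum, ← Finset.sum_sub_distrib]
        exact Finset.sum_congr rfl fun j _ => by ring
      have h3 : ∑ j ∈ Finset.Icc 1 k, a i j * (lam j * ρ x * u j x)
          = -∑ j ∈ Finset.Icc 1 k, a i j * lap n (u j) x
            + V x * ∑ j ∈ Finset.Icc 1 k, a i j * u j x := by
        rw [Finset.mul_sum, ← Finset.sum_neg_distrib, ← Finset.sum_add_distrib]
        refine Finset.sum_congr rfl fun j hj => ?_
        rw [← heig j (hsub j hj) x hx]
        ring
      have h4 : ∑ j ∈ Finset.Icc 1 k, a i j * u j x = coord α x * u i x - φ i x := by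
        simp only [hφdef]; ring
      have h5 := heig i (hsub i hi) x hx
      have h6 : lap n (u i) x = V x * u i x - lam i * ρ x * u i x := by linarith
      rw [h2, h3, h4, h1, h6]
      field_simp
      ring
    rw [Finset.sum_congr rfl hpt, Finset.sum_add_distrib, Finset.sum_sub_distrib, ← Finset.mul_sum,
      Finset.sum_comm]
    rw [Finset.sum_eq_zero (s := Finset.Icc 1 k), add_zero]
    intro j hj
    rw [← Finset.mul_sum, hφo i hi j hj, mul_zero]
  -- The double sum `∑ a_{ij} b_{ij}` vanishes, so the correlations sum to the pairings.
  calc ∑ i ∈ Finset.Icc 1 k, ∑ x ∈ Ω, u i x * u i (x + stdE α)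
      = ∑ i ∈ Finset.Icc 1 k, -∑ x ∈ Ω, (u i (x + stdE α) - u i (x - stdE α)) * φ i x := by
        rw [Finset.sum_neg_distrib, Finset.sum_congr rfl hpair, Finset.sum_sub_distrib, hab,
          Finset.sum_neg_distrib, sub_zero, neg_neg]
    _ ≤ _ := by
        refine Finset.sum_le_sum fun i hi => ?_
        refine pairing_le Ω _ (φ i) ρ _ _ _ hd hr (sub_pos.2 (hgap i hi)) hρ ?_
        have h1 := rayleigh Ω V ρ lam u hu0 heig horth hmono k (φ i) (hφ0 i hi) (hφo i hi)
        rw [hφeq i hi] at h1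
        linarith

/-- Hile–Protter type inequality for the discrete Schrödinger operator on a
finite subset of `ℤⁿ`. -/
theorem hile_protter_type (n : ℕ) (hn : 0 < n) (Ω : Finset (Fin n → ℤ)) (hne : Ω.Nonempty)
    (V ρ : (Fin n → ℤ) → ℝ)
    (hV : ∀ x ∈ Ω, 0 ≤ V x) (hρ : ∀ x ∈ Ω, 0 < ρ x)
    (lam : ℕ → ℝ) (u : ℕ → (Fin n → ℤ) → ℝ)
    (hu0 : ∀ i ∈ Finset.Icc 1 Ω.card, ∀ x ∉ Ω, u i x = 0)
    (heig : ∀ i ∈ Finset.Icc 1 Ω.card, ∀ x ∈ Ω,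
      -(lap n (u i) x) + V x * u i x = lam i * ρ x * u i x)
    (horth : ∀ i ∈ Finset.Icc 1 Ω.card, ∀ j ∈ Finset.Icc 1 Ω.card,
      ∑ x ∈ Ω, u i x * u j x * ρ x * deg n = if i = j then 1 else 0)
    (hmono : ∀ i j : ℕ, 1 ≤ i → i ≤ j → j ≤ Ω.card → lam i ≤ lam j)
    (hpos : 0 < lam 1)
    (k : ℕ) (hk1 : 1 ≤ k) (hk2 : k ≤ Ω.card - 1)
    (hgap : lam k < lam (k + 1)) :
    ∑ i ∈ Finset.Icc 1 k, lam i / (lam (k + 1) - lam i)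
      ≥ (n * k / 4) *
          (Ω.inf' hne ρ / Ω.sup' hne ρ
            - (Ω.inf' hne ρ / k) * ∑ i ∈ Finset.Icc 1 k, lam i) := by
  have hN : 0 < Ω.card := hne.card_pos
  have hd : deg n = 2 * n := rfl
  have hn' : (0 : ℝ) < n := by exact_mod_cast hn
  have hk' : (0 : ℝ) < k := by exact_mod_cast hk1
  set r := Ω.inf' hne ρ with hr
  set R := Ω.sup' hne ρ with hR
  have hr0 : 0 < r := (Finset.lt_inf'_iff hne).2 hρ
  have hrρ : ∀ x ∈ Ω, r ≤ ρ x := fun x hx => Finset.inf'_le _ hx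
  have hRρ : ∀ x ∈ Ω, ρ x ≤ R := fun x hx => Finset.le_sup' _ hx
  have hR0 : 0 < R := by
    obtain ⟨x, hx⟩ := hne
    exact (hρ x hx).trans_le (hRρ x hx)
  have hsub : ∀ i ∈ Finset.Icc 1 k, i ∈ Finset.Icc 1 Ω.card := fun i hi => by
    rw [Finset.mem_Icc] at hi ⊢; omega
  have hg : ∀ i ∈ Finset.Icc 1 k, lam i < lam (k + 1) := fun i hi => by
    rw [Finset.mem_Icc] at hi
    exact (hmono i k hi.1 hi.2 (by omega)).trans_lt hgap
  set Q : ℕ → Fin n → ℝ := fun i α => ∑ x ∈ Ω, u i x * u i (x + stdE α) with hQ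
  set P : ℕ → ℝ := fun i => ∑ x ∈ Ω, u i x ^ 2 with hP
  -- Dropping the nonnegative potential term bounds the Dirichlet energy by the eigenvalue.
  have hE : ∀ i ∈ Finset.Icc 1 k, 2 * ∑ α, (P i - Q i α) ≤ lam i := by
    intro i hi
    have h1 := energy_eq hn Ω (u i) (hu0 i (hsub i hi))
    have h2 := horth i (hsub i hi) i (hsub i hi)
    rw [if_pos rfl] at h2
    rw [← h1]
    calc _ ≤ ∑ x ∈ Ω, lam i * (u i x * u i x * ρ x * deg n) := by
          refine Finset.sum_le_sum fun x hx => ?_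
          have h3 := heig i (hsub i hi) x hx
          have h4 : 0 ≤ V x * (u i x ^ 2 * deg n) :=
            mul_nonneg (hV x hx) (by rw [hd]; positivity)
          have h5 : -(lap n (u i) x) = lam i * ρ x * u i x - V x * u i x := by linarith
          rw [h5]
          nlinarith
      _ = lam i := by rw [← Finset.mul_sum, h2, mul_one]
  have hPR : ∀ i ∈ Finset.Icc 1 k, 1 / R ≤ 2 * n * P i := by
    intro i hi
    have h2 := horth i (hsub i hi) i (hsub i hi)
    rw [if_pos rfl] at h2
    rw [div_le_iff₀ hR0, ← h2, hP]
    simp only [Finset.mul_sum, Finset.sum_mul]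
    refine Finset.sum_le_sum fun x hx => ?_
    have := mul_le_mul_of_nonneg_left (hRρ x hx)
      (by positivity : 0 ≤ 2 * (n : ℝ) * u i x ^ 2)
    rw [hd]
    linarith
  have hlow : ∀ i ∈ Finset.Icc 1 k, (1 / R - lam i) / 2 ≤ ∑ α, Q i α := by
    intro i hi
    have h1 := hE i hi
    have h2 := hPR i hi
    rw [Finset.sum_sub_distrib] at h1
    simp only [Finset.sum_const, Finset.card_univ, Fintype.card_fin, nsmul_eq_mul] at h1
    linarith
  have hup : ∀ i ∈ Finset.Icc 1 k,
      ∑ α, (∑ x ∈ Ω, (u i (x + stdE α) - u i (x - stdE α)) ^ 2)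
        / (deg n * r * (lam (k + 1) - lam i))
      ≤ 2 / (n * r) * (lam i / (lam (k + 1) - lam i)) := by
    intro i hi
    have hgi : 0 < lam (k + 1) - lam i := sub_pos.2 (hg i hi)
    have h1 : ∑ α, ∑ x ∈ Ω, (u i (x + stdE α) - u i (x - stdE α)) ^ 2 ≤ 4 * lam i := by
      calc _ ≤ ∑ α, 8 * (P i - Q i α) :=
            Finset.sum_le_sum fun α _ => sum_diff_sq_le Ω _ _ (hu0 i (hsub i hi))
        _ ≤ 4 * lam i := by
            rw [← Finset.mul_sum]
            linarith [hE i hi]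
    rw [← Finset.sum_div]
    have h2 : 2 / (n * r) * (lam i / (lam (k + 1) - lam i))
        = 4 * lam i / (deg n * r * (lam (k + 1) - lam i)) := by
      rw [hd]
      field_simp
      ring
    rw [h2]
    exact div_le_div_of_nonneg_right h1 (by rw [hd]; positivity)
  have hmain : ∑ i ∈ Finset.Icc 1 k, (1 / R - lam i) / 2
      ≤ 2 / (n * r) * ∑ i ∈ Finset.Icc 1 k, lam i / (lam (k + 1) - lam i) := by
    calc _ ≤ ∑ i ∈ Finset.Icc 1 k, ∑ α, Q i α := Finset.sum_le_sum hlow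
      _ = ∑ α, ∑ i ∈ Finset.Icc 1 k, Q i α := Finset.sum_comm
      _ ≤ ∑ α, ∑ i ∈ Finset.Icc 1 k, (∑ x ∈ Ω, (u i (x + stdE α) - u i (x - stdE α)) ^ 2)
            / (deg n * r * (lam (k + 1) - lam i)) :=
          Finset.sum_le_sum fun α _ => direction_bound hn Ω V ρ r hr0 hrρ lam u hu0 heig horth
            hmono k (by omega) hg α
      _ = ∑ i ∈ Finset.Icc 1 k, ∑ α, (∑ x ∈ Ω, (u i (x + stdE α) - u i (x - stdE α)) ^ 2)
            / (deg n * r * (lam (k + 1) - lam i)) := Finset.sum_comm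
      _ ≤ _ := by
          rw [Finset.mul_sum]
          exact Finset.sum_le_sum hup
  rw [← Finset.sum_div, Finset.sum_sub_distrib] at hmain
  simp only [Finset.sum_const, Nat.card_Icc, Nat.add_sub_cancel, nsmul_eq_mul] at hmain
  have hmul := mul_le_mul_of_nonneg_left hmain (by positivity : 0 ≤ n * r / 2)
  have e1 : n * r / 2 * (2 / (n * r) * ∑ i ∈ Finset.Icc 1 k, lam i / (lam (k + 1) - lam i))
      = ∑ i ∈ Finset.Icc 1 k, lam i / (lam (k + 1) - lam i) := by
    field_simp
  rw [e1] at hmul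
  refine le_trans (le_of_eq ?_) hmul
  field_simp
  ring
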